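/- arXiv:2106.03120 — 3 statements merged into one kernel-verified Lean document; each statement's English description precedes it below -/
import Mathlib

section
/- Let (𝔩,𝔪) be a permissible pair, with 𝔪 = Σ_{i∈I} Δ_i and 𝔩 = Σ_{j∈J} Δ_j as in the standing notation. Let i ∈ I be an index and n an integer with 𝔡(i) < n ≤ 𝔡'(i). Then there exists an index i(n) ∈ I such that Δ_{i(n)} ≪ Δ_i and 𝔡(i(n)) = n. -/
/-!
Let `i = i_0, …, i_k` be a chain attaining the minimum `𝔡(i) = 𝔡'(i_k) - k`. The depth grows by
exactly one at each step of it: `𝔡(i_r) = 𝔡(i) + r`. The bound `≤` comes from the tail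
`i_r, …, i_k`; the bound `≥` comes from appending a minimizing chain of `i_r` to `i_0, …, i_r`
(`KVData.sub_mem_depthSet`). So every value in `(𝔡(i), 𝔡'(i_k)]` is the depth of some `i_r` with
`r ≥ 1`, and `Δ_{i_r} ≪ Δ_i` by transitivity. Finally `𝔡'(i) ≤ 𝔡'(i_k)`, because `𝔡'` is antitone
for `≪` (`KVData.dPrime_le_of_ll`).
-/

/-- A *segment* `Δ(a,b)`: a pair of integers `a ≤ b`.  `b` is the begin point
and `e` the end point. -/
structure Segment where
  b : ℤ
  e : ℤ
  le : b ≤ e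

namespace Segment

/-- `Δ₁ ≪ Δ₂` : `b(Δ₁) < b(Δ₂)` and `e(Δ₁) < e(Δ₂)`. -/
def ll (Δ₁ Δ₂ : Segment) : Prop := Δ₁.b < Δ₂.b ∧ Δ₁.e < Δ₂.e

/-- `Δ₁ ≺ Δ₂` : `b(Δ₁) < b(Δ₂)`, `e(Δ₁) < e(Δ₂)` and `e(Δ₁) ≥ b(Δ₂) - 1`. -/
def prec (Δ₁ Δ₂ : Segment) : Prop := Δ₁.b < Δ₂.b ∧ Δ₁.e < Δ₂.e ∧ Δ₂.b - 1 ≤ Δ₁.e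

/-- `⁻Δ = Δ(a-1, b-1)`. -/
def shiftDown (Δ : Segment) : Segment := ⟨Δ.b - 1, Δ.e - 1, by have := Δ.le; omega⟩

end Segment

/-- The standing data of the inverse Knuth–Viennot algorithm: a nonzero multisegment
`𝔪 = Σ_{i ∈ I} Δ_i` indexed by `I = Fin n` (linearly ordered compatibly with begin
points, ties broken by reversed end points), and a ladder multisegment
`𝔩 = Σ_{t ∈ J} Δ_{j_t}` indexed by `J = Fin l` (`jseg t` is the segment `Δ_{j_{t+1}}`,
enumerated so that `Δ_{j_l} ≪ ⋯ ≪ Δ_{j_1}`), such that the pair `(𝔩, 𝔪)` is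
permissible. -/
structure KVData where
  n : ℕ
  l : ℕ
  npos : 0 < n
  lpos : 0 < l
  iseg : Fin n → Segment
  jseg : Fin l → Segment
  iOrder : ∀ i₁ i₂ : Fin n, i₂ < i₁ →
    (iseg i₂).b < (iseg i₁).b ∨ ((iseg i₂).b = (iseg i₁).b ∧ (iseg i₁).e ≤ (iseg i₂).e)
  ladder : ∀ t t' : Fin l, t < t' → Segment.ll (jseg t') (jseg t)
  permissible : ∀ (m : ℕ) (c : Fin m → Fin n),
    (∀ r s : Fin m, r < s → Segment.ll (iseg (c s)) (iseg (c r))) →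
    ∃ φ : Fin m → Fin l, StrictMono φ ∧
      ∀ t : Fin m, Segment.prec (Segment.shiftDown (iseg (c t))) (jseg (φ t))

namespace KVData

variable (D : KVData)

/-- The segment attached to an index in `I ⊔ J`. -/
def segOf : Fin D.n ⊕ Fin D.l → Segment := Sum.elim D.iseg D.jseg

/-- The set `{t : ⁻Δ_i ≪ Δ_{j_t}}` (0-based positions in the ladder `𝔩`). -/
def dPrimeSet (i : Fin D.n) : Set ℕ :=
  {t : ℕ | ∃ h : t < D.l, Segment.ll (Segment.shiftDown (D.iseg i)) (D.jseg ⟨t, h⟩)}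

/-- The set `{𝔡'(i_k) - k : i = i_0, Δ_{i_{r+1}} ≪ Δ_{i_r}}` whose minimum is `𝔡(i)`. -/
def depthSet (d' : Fin D.n → ℕ) (i : Fin D.n) : Set ℤ :=
  {z : ℤ | ∃ (k : ℕ) (c : ℕ → Fin D.n), c 0 = i ∧
    (∀ r < k, Segment.ll (D.iseg (c (r + 1))) (D.iseg (c r))) ∧
    z = (d' (c k) : ℤ) - (k : ℤ)}

/-- `d'` is the function `𝔡'` and `d` the depth function `𝔡` on `I ⊔ J`
(`𝔡'(i) = max{t : ⁻Δ_i ≪ Δ_{j_t}}`, `𝔡(i) = min{𝔡'(i_k) - k}`, `𝔡(j_t) = t`). -/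
def DepthSpec (d' : Fin D.n → ℕ) (d : Fin D.n ⊕ Fin D.l → ℤ) : Prop :=
  (∀ i, IsGreatest (D.dPrimeSet i) (d' i)) ∧
  (∀ i, IsLeast (D.depthSet d' i) (d (Sum.inl i))) ∧
  (∀ t : Fin D.l, d (Sum.inr t) = (t : ℤ))

/-- `σ` is the permutation of `I ⊔ J` whose disjoint cycles are `(i_1, …, i_s, j_t)`
where `{i_1 > … > i_s} ∪ {j_t} = 𝔡⁻¹(t)`:  an element `i ∈ I` is sent to the largest
element of `I` below it in its fiber of `𝔡`, or to the `J`-element of the fiber if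
there is none; the `J`-element of a fiber is sent to the largest `I`-element of the
fiber, or to itself if there is none. -/
def SigmaSpec (d : Fin D.n ⊕ Fin D.l → ℤ) (σ : Equiv.Perm (Fin D.n ⊕ Fin D.l)) : Prop :=
  (∀ i : Fin D.n,
    (∃ i' : Fin D.n,
        IsGreatest {i'' : Fin D.n | i'' < i ∧ d (Sum.inl i'') = d (Sum.inl i)} i' ∧
        σ (Sum.inl i) = Sum.inl i')
    ∨ ((¬ ∃ i'' : Fin D.n, i'' < i ∧ d (Sum.inl i'') = d (Sum.inl i)) ∧
        ∃ t : Fin D.l, (t : ℤ) = d (Sum.inl i) ∧ σ (Sum.inl i) = Sum.inr t)) ∧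
  (∀ t : Fin D.l,
    (∃ i : Fin D.n,
        IsGreatest {i' : Fin D.n | d (Sum.inl i') = (t : ℤ)} i ∧
        σ (Sum.inr t) = Sum.inl i)
    ∨ ((¬ ∃ i : Fin D.n, d (Sum.inl i) = (t : ℤ)) ∧ σ (Sum.inr t) = Sum.inr t))

/-- `e(Δ♣_x) ≠ e(Δ_x)`, i.e. the end point changes at `x`
(recall `Δ♣_x = Δ(b(Δ_x), e(Δ_{σ(x)}))`). -/
def breaksEnd (σ : Equiv.Perm (Fin D.n ⊕ Fin D.l)) (x : Fin D.n ⊕ Fin D.l) : Prop :=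
  (D.segOf (σ x)).e ≠ (D.segOf x).e

/-- `vee` is the map `x ↦ x^∨`:  `x^∨ = σ^{-r}(x)` for the least `r ≥ 1` such that
`e(Δ♣_{σ^{-r}(x)}) ≠ e(Δ_{σ^{-r}(x)})`, and `x^∨ = j_{𝔡(x)}` if no such `r` exists. -/
def VeeSpec (d : Fin D.n ⊕ Fin D.l → ℤ) (σ : Equiv.Perm (Fin D.n ⊕ Fin D.l))
    (vee : Fin D.n ⊕ Fin D.l → Fin D.n ⊕ Fin D.l) : Prop :=
  ∀ x : Fin D.n ⊕ Fin D.l,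
    ((∃ r : ℕ, 1 ≤ r ∧ D.breaksEnd σ ((⇑σ.symm)^[r] x)) →
      ∃ r : ℕ, 1 ≤ r ∧ vee x = (⇑σ.symm)^[r] x ∧ D.breaksEnd σ ((⇑σ.symm)^[r] x) ∧
        ∀ r' : ℕ, 1 ≤ r' → r' < r → ¬ D.breaksEnd σ ((⇑σ.symm)^[r'] x)) ∧
    ((¬ ∃ r : ℕ, 1 ≤ r ∧ D.breaksEnd σ ((⇑σ.symm)^[r] x)) →
      ∃ t : Fin D.l, (t : ℤ) = d x ∧ vee x = Sum.inr t)

/-- The multisegment `𝔪` of the data. -/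
def mSeg : Multiset Segment := Multiset.map D.iseg Finset.univ.val

/-- The ladder multisegment `𝔩` of the data. -/
def lSeg : Multiset Segment := Multiset.map D.jseg Finset.univ.val

end KVData

theorem Segment.ll_trans {x y w : Segment} (hxy : x.ll y) (hyw : y.ll w) : x.ll w :=
  ⟨hxy.1.trans hyw.1, hxy.2.trans hyw.2⟩

namespace KVData

theorem ll_of_chain (D : KVData) {k : ℕ} {c : ℕ → Fin D.n}
    (hc : ∀ r < k, Segment.ll (D.iseg (c (r + 1))) (D.iseg (c r)))
    {r : ℕ} (hr : 0 < r) (hrk : r ≤ k) : Segment.ll (D.iseg (c r)) (D.iseg (c 0)) := by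
  induction r, hr using Nat.le_induction with
  | base => exact hc 0 (by omega)
  | succ r hr ih => exact Segment.ll_trans (hc r (by omega)) (ih (by omega))

theorem dPrime_le_of_ll (D : KVData) {d' : Fin D.n → ℕ}
    (hd' : ∀ i, IsGreatest (D.dPrimeSet i) (d' i)) {i i' : Fin D.n}
    (h : Segment.ll (D.iseg i') (D.iseg i)) : d' i ≤ d' i' := by
  obtain ⟨ht, hll⟩ := (hd' i).1
  refine (hd' i').2 ⟨ht, Segment.ll_trans ?_ hll⟩
  exact ⟨sub_lt_sub_right h.1 1, sub_lt_sub_right h.2 1⟩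

/-- Prefixing a chain that starts at `c r` by `c 0, …, c r` makes it longer by `r`, hence lowers
the value it contributes by `r`. -/
theorem sub_mem_depthSet (D : KVData) {d' : Fin D.n → ℕ} {i : Fin D.n} {r : ℕ}
    {c : ℕ → Fin D.n} (hc0 : c 0 = i)
    (hc : ∀ s < r, Segment.ll (D.iseg (c (s + 1))) (D.iseg (c s)))
    {z : ℤ} (hz : z ∈ D.depthSet d' (c r)) : z - r ∈ D.depthSet d' i := by
  obtain ⟨m, b, hb0, hb, rfl⟩ := hz
  refine ⟨r + m, fun s => if s < r then c s else b (s - r), ?_, fun s hs => ?_, ?_⟩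
  · rcases Nat.eq_zero_or_pos r with rfl | hr
    · simpa [hc0] using hb0
    · simp [hr, hc0]
  · rcases lt_trichotomy (s + 1) r with h | h | h
    · simpa [h, (Nat.lt_succ_self s).trans h] using hc s (by omega)
    · subst h
      simpa [hb0] using hc s (Nat.lt_succ_self s)
    · have hle : r ≤ s := by omega
      simpa [hle.not_gt, h.not_gt, Nat.sub_add_comm hle] using hb (s - r) (by omega)
  · simp
    ring

end KVData

/-- Lemma `lem:techdep`.  Let `(𝔩,𝔪)` be a permissible pair and let
`i ∈ I` and `z` be an integer with `𝔡(i) < z ≤ 𝔡'(i)`.  Then there exists `i(z) ∈ I`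
with `Δ_{i(z)} ≪ Δ_i` and `𝔡(i(z)) = z`. -/
theorem depth_intermediate_chain (D : KVData) (d' : Fin D.n → ℕ)
    (d : Fin D.n ⊕ Fin D.l → ℤ) (hdep : D.DepthSpec d' d)
    (i : Fin D.n) (z : ℤ) (h1 : d (Sum.inl i) < z) (h2 : z ≤ (d' i : ℤ)) :
    ∃ i' : Fin D.n, Segment.ll (D.iseg i') (D.iseg i) ∧ d (Sum.inl i') = z := by
  obtain ⟨hd', hd, -⟩ := hdep
  obtain ⟨k, c, hc0, hc, hk⟩ := (hd i).1
  -- `z ≤ 𝔡'(i) ≤ 𝔡'(i_k) = 𝔡(i) + k`, so `z` lies on the minimizing chain.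
  have hzk : z ≤ (d' (c k) : ℤ) := by
    rcases Nat.eq_zero_or_pos k with rfl | hpos
    · rwa [hc0]
    · have hlt := D.ll_of_chain hc hpos le_rfl
      rw [hc0] at hlt
      exact h2.trans (by exact_mod_cast D.dPrime_le_of_ll hd' hlt)
  obtain ⟨r, hr⟩ : ∃ r : ℕ, (r : ℤ) = z - d (Sum.inl i) :=
    ⟨(z - d (Sum.inl i)).toNat, Int.toNat_of_nonneg (by omega)⟩
  have hr0 : 0 < r := by omega
  have hrk : r ≤ k := by omega
  refine ⟨c r, hc0 ▸ D.ll_of_chain hc hr0 hrk, le_antisymm ?_ ?_⟩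
  · -- The tail of the chain, starting at `i_r`, bounds `𝔡(i_r)` from above.
    have hle : d (Sum.inl (c r)) ≤ (d' (c k) : ℤ) - ((k - r : ℕ) : ℤ) := by
      refine (hd (c r)).2 ⟨k - r, fun s => c (r + s), rfl, fun s hs => hc (r + s) (by omega), ?_⟩
      simp only [Nat.add_sub_cancel' hrk]
    omega
  · -- A minimizing chain of `i_r`, appended to `i_0, …, i_r`, bounds `𝔡(i)` from above.
    have hle := (hd i).2 (D.sub_mem_depthSet hc0 (fun s hs => hc s (by omega)) (hd (c r)).1)
    omega
end

section
/- Let (𝔩,𝔪) be a permissible pair with the algorithm notations in place. Let i, i' ∈ I be indices such that e(Δ_i) = e(Δ_{i'}) and b(Δ_i) < b(Δ_{i'}) ≤ b(Δ_{i^∨}). Then 𝔡(i') = 𝔡(i) and Δ♣_{i'} = Δ_{i'}. -/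
namespace KVData

variable {D : KVData} {d' : Fin D.n → ℕ} {d : Fin D.n ⊕ Fin D.l → ℤ}
  {σ : Equiv.Perm (Fin D.n ⊕ Fin D.l)} {vee : Fin D.n ⊕ Fin D.l → Fin D.n ⊕ Fin D.l}

/-! ### The order on indices and the depth function -/

lemma lt_of_b_lt {x y : Fin D.n} (h : (D.iseg x).b < (D.iseg y).b) : x < y := by
  rcases lt_trichotomy x y with h1 | h1 | h1
  · exact h1
  · subst h1; omega
  · rcases D.iOrder x y h1 with h2 | h2 <;> omega

lemma b_le_of_le {x y : Fin D.n} (h : x ≤ y) : (D.iseg x).b ≤ (D.iseg y).b := by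
  rcases h.lt_or_eq with h1 | h1
  · rcases D.iOrder y x h1 with h2 | h2 <;> omega
  · rw [h1]

lemma ladder_le {t t' : Fin D.l} (h : t ≤ t') :
    (D.jseg t').b ≤ (D.jseg t).b ∧ (D.jseg t').e ≤ (D.jseg t).e := by
  rcases h.lt_or_eq with h1 | h1
  · have h2 := D.ladder t t' h1
    exact ⟨h2.1.le, h2.2.le⟩
  · simp [h1]

lemma depth_le_dPrime (hdep : D.DepthSpec d' d) (x : Fin D.n) : d (Sum.inl x) ≤ d' x :=
  (hdep.2.1 x).2 ⟨0, fun _ => x, rfl, by simp, by simp⟩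

lemma depth_lt_of_ll (hdep : D.DepthSpec d' d) {x y : Fin D.n}
    (h : Segment.ll (D.iseg y) (D.iseg x)) : d (Sum.inl x) < d (Sum.inl y) := by
  obtain ⟨k, c, h0, hc, hz⟩ := (hdep.2.1 y).1
  have h1 : d (Sum.inl x) ≤ (d' (c k) : ℤ) - ((k + 1 : ℕ) : ℤ) := by
    -- Prepend `x` to a chain realising the minimum for `y`.
    refine (hdep.2.1 x).2 ⟨k + 1, fun r => Nat.casesOn r x c, rfl, ?_, rfl⟩
    rintro (_ | r) hr
    · simpa [h0] using h
    · exact hc r (by omega)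
  push_cast at h1
  omega

/-- The recursion satisfied by `𝔡`: either the trivial chain realises the minimum, or some
`Δ_y ≪ Δ_x` has `𝔡(y) ≤ 𝔡(x) + 1`. -/
lemma depth_cases (hdep : D.DepthSpec d' d) (x : Fin D.n) :
    d (Sum.inl x) = d' x ∨
      ∃ y, Segment.ll (D.iseg y) (D.iseg x) ∧ d (Sum.inl y) ≤ d (Sum.inl x) + 1 := by
  obtain ⟨k, c, h0, hc, hz⟩ := (hdep.2.1 x).1
  rcases k with _ | k
  · left; simpa [h0] using hz
  · right
    refine ⟨c 1, by simpa [h0] using hc 0 (by omega), ?_⟩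
    have h1 : d (Sum.inl (c 1)) ≤ (d' (c (k + 1)) : ℤ) - (k : ℤ) :=
      (hdep.2.1 (c 1)).2 ⟨k, fun r => c (r + 1), rfl, fun r hr => hc (r + 1) (by omega), rfl⟩
    push_cast at hz
    omega

lemma le_dPrime (hdep : D.DepthSpec d' d) {x : Fin D.n} {t : Fin D.l}
    (hb : (D.iseg x).b ≤ (D.jseg t).b) (he : (D.iseg x).e ≤ (D.jseg t).e) : (t : ℕ) ≤ d' x := by
  refine (hdep.1 x).2 ⟨t.2, ?_, ?_⟩ <;> simp [Segment.shiftDown] <;> omega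

/-- If `t ≤ 𝔡(x)`, in particular if `x` lies in the fiber over `t`, then the begin and end points of
`Δ_x` are bounded by those of `Δ_{j_t}`. -/
lemma fiber_le_ladder (hdep : D.DepthSpec d' d) {x : Fin D.n} {t : Fin D.l}
    (h : (t : ℤ) ≤ d (Sum.inl x)) :
    (D.iseg x).b ≤ (D.jseg t).b ∧ (D.iseg x).e ≤ (D.jseg t).e := by
  obtain ⟨hl, h1, h2⟩ := (hdep.1 x).1
  have h3 := depth_le_dPrime hdep x
  have h4 := ladder_le (D := D) (t := t) (t' := ⟨d' x, hl⟩) (by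
    rw [Fin.le_def]; simp only; omega)
  simp only [Segment.shiftDown] at h1 h2
  omega

lemma depth_mono (hdep : D.DepthSpec d' d) {x y : Fin D.n}
    (hb : (D.iseg x).b ≤ (D.iseg y).b) (he : (D.iseg x).e ≤ (D.iseg y).e) :
    d (Sum.inl y) ≤ d (Sum.inl x) := by
  rcases depth_cases hdep x with h | ⟨z, hz, hz'⟩
  · obtain ⟨hl, h1, h2⟩ := (hdep.1 y).1
    simp only [Segment.shiftDown] at h1 h2
    have h3 := le_dPrime hdep (x := x) (t := ⟨d' y, hl⟩) (by omega) (by omega)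
    have h4 := depth_le_dPrime hdep y
    simp only at h3
    omega
  · have := depth_lt_of_ll hdep (x := y) (y := z) ⟨by have := hz.1; omega, by have := hz.2; omega⟩
    omega

/-! ### Fibers of the depth function and the permutation `σ` -/

/-- Within a fiber of `𝔡`, end points increase weakly as the index decreases. -/
lemma fiber_e_le (hdep : D.DepthSpec d' d) {x y : Fin D.n} (h : x ≤ y)
    (hd : d (Sum.inl x) = d (Sum.inl y)) : (D.iseg y).e ≤ (D.iseg x).e := by
  rcases h.lt_or_eq with h1 | h1
  · rcases D.iOrder y x h1 with h2 | h2
    · by_contra hcon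
      have := depth_lt_of_ll hdep (x := y) (y := x) ⟨h2, by omega⟩
      omega
    · exact h2.2
  · rw [h1]

/-- `0 ≤ 𝔡(x) < l`: the last `I`-index of the cycle through `x` is sent to some `j_t`. -/
lemma exists_fiber_index (hσ : D.SigmaSpec d σ) (x : Fin D.n) :
    ∃ t : Fin D.l, (t : ℤ) = d (Sum.inl x) := by
  induction x using WellFoundedLT.induction with
  | ind x ih =>
    rcases hσ.1 x with ⟨y, hy, -⟩ | ⟨-, t, ht, -⟩
    · obtain ⟨t, ht⟩ := ih y hy.1.1
      exact ⟨t, ht.trans hy.1.2⟩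
    · exact ⟨t, ht⟩

lemma depth_sigma (hdep : D.DepthSpec d' d) (hσ : D.SigmaSpec d σ) (w : Fin D.n ⊕ Fin D.l) :
    d (σ w) = d w := by
  rcases w with x | t
  · rcases hσ.1 x with ⟨y, hy, h⟩ | ⟨-, t, ht, h⟩
    · rw [h]; exact hy.1.2
    · rw [h, hdep.2.2, ht]
  · rcases hσ.2 t with ⟨y, hy, h⟩ | ⟨-, h⟩
    · rw [h, hdep.2.2]; exact hy.1
    · rw [h]

lemma depth_sigma_symm_iterate (hdep : D.DepthSpec d' d) (hσ : D.SigmaSpec d σ)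
    (w : Fin D.n ⊕ Fin D.l) (r : ℕ) : d ((⇑σ.symm)^[r] w) = d w := by
  induction r with
  | zero => rfl
  | succ r ih =>
    rw [Function.iterate_succ_apply', ← ih, ← depth_sigma hdep hσ (σ.symm _),
      Equiv.apply_symm_apply]

/-- The predecessor of `q` in its cycle is either the next larger `I`-index of the fiber, or an
element of `J`, in which case `q` is the largest `I`-index of the fiber. -/
lemma sigma_symm_cases (hdep : D.DepthSpec d' d) (hσ : D.SigmaSpec d σ) (q : Fin D.n) :
    (∃ p, σ.symm (Sum.inl q) = Sum.inl p ∧ q < p ∧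
        ∀ y, d (Sum.inl y) = d (Sum.inl q) → q < y → p ≤ y) ∨
      ((∃ t, σ.symm (Sum.inl q) = Sum.inr t) ∧ ∀ y, d (Sum.inl y) = d (Sum.inl q) → y ≤ q) := by
  have hw : σ (σ.symm (Sum.inl q)) = Sum.inl q := Equiv.apply_symm_apply _ _
  have hdw := depth_sigma hdep hσ (σ.symm (Sum.inl q))
  rw [hw] at hdw
  rcases hs : σ.symm (Sum.inl q) with p | t
  · left
    rw [hs] at hw hdw
    rcases hσ.1 p with ⟨y, hy, h⟩ | ⟨-, t, -, h⟩
    · obtain rfl : y = q := by rw [hw] at h; exact (Sum.inl.inj h).symm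
      refine ⟨p, rfl, hy.1.1, fun z hz hlt => ?_⟩
      by_contra hcon
      exact absurd (hy.2 ⟨not_le.mp hcon, hz.trans hdw⟩) (not_le.mpr hlt)
    · rw [hw] at h; cases h
  · right
    rw [hs] at hw hdw
    refine ⟨⟨t, rfl⟩, ?_⟩
    rcases hσ.2 t with ⟨y, hy, h⟩ | ⟨-, h⟩
    · obtain rfl : y = q := by rw [hw] at h; exact (Sum.inl.inj h).symm
      intro z hz
      exact hy.2 (by rw [Set.mem_ofPred_eq, hz, hdw, hdep.2.2])
    · rw [hw] at h; cases h

/-! ### The walk from `i` back to `i^∨` -/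

/-- As long as the end point does not change, walking backwards from `i` stays below every `y` of
the fiber with `e(Δ_y) < e(Δ_i)`. The bound `i + r ≤ q` records that each step strictly increases
the index, so the walk cannot continue forever. -/
lemma walk_invariant (hdep : D.DepthSpec d' d) (hσ : D.SigmaSpec d σ) {i y : Fin D.n}
    (hy : d (Sum.inl y) = d (Sum.inl i)) (hye : (D.iseg y).e < (D.iseg i).e) (r : ℕ)
    (hr : ∀ r', 1 ≤ r' → r' ≤ r → ¬ D.breaksEnd σ ((⇑σ.symm)^[r'] (Sum.inl i))) :
    ∃ q, (⇑σ.symm)^[r] (Sum.inl i) = Sum.inl q ∧ (D.iseg q).e = (D.iseg i).e ∧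
      d (Sum.inl q) = d (Sum.inl i) ∧ q < y ∧ (i : ℕ) + r ≤ q := by
  induction r with
  | zero =>
    refine ⟨i, rfl, rfl, rfl, ?_, by simp⟩
    by_contra hcon
    have := fiber_e_le hdep (not_lt.mp hcon) hy
    omega
  | succ r ih =>
    obtain ⟨q, hq, hqe, hqd, hqy, hqr⟩ := ih fun r' h1 h2 => hr r' h1 (by omega)
    have hbr := hr (r + 1) (by omega) le_rfl
    rw [Function.iterate_succ_apply', hq] at hbr ⊢
    rcases sigma_symm_cases hdep hσ q with ⟨p, hp, hqp, hmin⟩ | ⟨-, hmax⟩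
    · have hpd := depth_sigma hdep hσ (σ.symm (Sum.inl q))
      rw [breaksEnd, not_not, Equiv.apply_symm_apply, hp] at hbr
      rw [Equiv.apply_symm_apply, hp] at hpd
      have hpe : (D.iseg p).e = (D.iseg i).e := hbr.symm.trans hqe
      refine ⟨p, hp, hpe, hpd.symm.trans hqd, ?_, ?_⟩
      · refine lt_of_le_of_ne (hmin y (hy.trans hqd.symm) hqy) ?_
        rintro rfl
        omega
      · rw [Fin.lt_def] at hqp; omega
    · exact absurd (hmax y (hy.trans hqd.symm)) (not_le.mpr hqy)

/-- An index of the fiber of `i` whose end point is smaller than `e(Δ_i)` begins no earlier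
than `i^∨`. -/
lemma vee_b_le (hdep : D.DepthSpec d' d) (hσ : D.SigmaSpec d σ) (hvee : D.VeeSpec d σ vee)
    {i y : Fin D.n} (hy : d (Sum.inl y) = d (Sum.inl i))
    (hye : (D.iseg y).e < (D.iseg i).e) : (D.segOf (vee (Sum.inl i))).b ≤ (D.iseg y).b := by
  by_cases hex : ∃ r : ℕ, 1 ≤ r ∧ D.breaksEnd σ ((⇑σ.symm)^[r] (Sum.inl i))
  · obtain ⟨r, hr1, hv, -, hmin⟩ := (hvee (Sum.inl i)).1 hex
    obtain ⟨r, rfl⟩ : ∃ s, r = s + 1 := ⟨r - 1, by omega⟩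
    obtain ⟨q, hq, -, hqd, hqy, -⟩ := walk_invariant hdep hσ hy hye r
      fun r' h1 h2 => hmin r' h1 (by omega)
    rw [hv, Function.iterate_succ_apply', hq]
    rcases sigma_symm_cases hdep hσ q with ⟨p, hp, -, hpmin⟩ | ⟨-, hmax⟩
    · rw [hp]
      exact b_le_of_le (hpmin y (hy.trans hqd.symm) hqy)
    · exact absurd (hmax y (hy.trans hqd.symm)) (not_le.mpr hqy)
  -- Without a change of end point no such `y` exists: `n` steps would leave `Fin n`.
  · push Not at hex
    obtain ⟨q, -, -, -, -, hq⟩ := walk_invariant hdep hσ hy hye D.n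
      fun r' h1 _ => hex r' h1
    have := q.2
    omega

lemma vee_b_le_ladder (hdep : D.DepthSpec d' d) (hσ : D.SigmaSpec d σ)
    (hvee : D.VeeSpec d σ vee) {i : Fin D.n} {t : Fin D.l} (ht : (t : ℤ) = d (Sum.inl i)) :
    (D.segOf (vee (Sum.inl i))).b ≤ (D.jseg t).b := by
  have hd : d (vee (Sum.inl i)) = d (Sum.inl i) := by
    by_cases hex : ∃ r : ℕ, 1 ≤ r ∧ D.breaksEnd σ ((⇑σ.symm)^[r] (Sum.inl i))
    · obtain ⟨r, -, hv, -⟩ := (hvee (Sum.inl i)).1 hex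
      rw [hv, depth_sigma_symm_iterate hdep hσ]
    · obtain ⟨s, hs, hv⟩ := (hvee (Sum.inl i)).2 hex
      rw [hv, hdep.2.2, hs]
  rcases hv : vee (Sum.inl i) with x | s
  · rw [hv] at hd
    exact (fiber_le_ladder hdep (by omega)).1
  · rw [hv, hdep.2.2] at hd
    obtain rfl : s = t := by ext; omega
    exact le_rfl

/-- A segment beginning no later than `Δ_{i^∨}` and ending no later than `Δ_i` has depth at
least `𝔡(i)`. -/
lemma le_depth_of_le_vee (hdep : D.DepthSpec d' d) (hσ : D.SigmaSpec d σ)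
    (hvee : D.VeeSpec d σ vee) {i : Fin D.n} (y : Fin D.n)
    (hb : (D.iseg y).b ≤ (D.segOf (vee (Sum.inl i))).b) (he : (D.iseg y).e ≤ (D.iseg i).e) :
    d (Sum.inl i) ≤ d (Sum.inl y) := by
  induction y using WellFoundedLT.induction with
  | ind y ih =>
    by_contra! hcon
    rcases depth_cases hdep y with h | ⟨z, hz, hzd⟩
    · obtain ⟨t, ht⟩ := exists_fiber_index hσ i
      have h1 := vee_b_le_ladder hdep hσ hvee ht
      have h2 := fiber_le_ladder hdep ht.le
      have h3 := le_dPrime hdep (x := y) (t := t) (by omega) (by omega)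
      omega
    · obtain ⟨hz1, hz2⟩ := hz
      have h1 := ih z (lt_of_b_lt hz1) (by omega) (by omega)
      have h2 := vee_b_le hdep hσ hvee (i := i) (y := z) (by omega) (by omega)
      omega

end KVData

/-- Lemma `lem:import`(1).  Let `(𝔩,𝔪)` be a permissible pair with the
algorithm notations in place.  Let `i, i' ∈ I` be indices such that `e(Δ_i) = e(Δ_{i'})`
and `b(Δ_i) < b(Δ_{i'}) ≤ b(Δ_{i^∨})`.  Then `𝔡(i') = 𝔡(i)` and `Δ♣_{i'} = Δ_{i'}`
(the latter amounts to `e(Δ_{σ(i')}) = e(Δ_{i'})`, since `b(Δ♣_{i'}) = b(Δ_{i'})`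
always holds). -/
theorem import_lemma_part1 (D : KVData) (d' : Fin D.n → ℕ)
    (d : Fin D.n ⊕ Fin D.l → ℤ) (σ : Equiv.Perm (Fin D.n ⊕ Fin D.l))
    (vee : Fin D.n ⊕ Fin D.l → Fin D.n ⊕ Fin D.l)
    (hdep : D.DepthSpec d' d) (hσ : D.SigmaSpec d σ) (hvee : D.VeeSpec d σ vee)
    (i i' : Fin D.n)
    (he : (D.iseg i).e = (D.iseg i').e)
    (hb1 : (D.iseg i).b < (D.iseg i').b)
    (hb2 : (D.iseg i').b ≤ (D.segOf (vee (Sum.inl i))).b) :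
    d (Sum.inl i') = d (Sum.inl i) ∧ (D.segOf (σ (Sum.inl i'))).e = (D.iseg i').e := by
  have hd : d (Sum.inl i') = d (Sum.inl i) :=
    le_antisymm (KVData.depth_mono hdep hb1.le he.le)
      (KVData.le_depth_of_le_vee hdep hσ hvee i' hb2 he.ge)
  refine ⟨hd, ?_⟩
  have hlt : i < i' := KVData.lt_of_b_lt hb1
  rcases hσ.1 i' with ⟨x, hx, h⟩ | ⟨hno, -⟩
  -- `σ(i')` lies between `i` and `i'` in their common fiber, so its end point is squeezed.
  · rw [h]
    have hix : i ≤ x := hx.2 ⟨hlt, hd.symm⟩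
    have h1 := KVData.fiber_e_le hdep hix (hd.symm.trans hx.1.2.symm)
    have h2 := KVData.fiber_e_le hdep hx.1.1.le hx.1.2
    exact le_antisymm (h1.trans he.le) h2
  · exact absurd ⟨i, hlt, hd.symm⟩ hno
end

section
/- Let 𝔪 be a nonzero multisegment with RSK-transform (𝔩_1,…,𝔩_d). Then 𝔟(𝔪) = 𝔟(𝔩_1) + … + 𝔟(𝔩_d) and 𝔢(𝔪) = 𝔢(𝔩_1) + … + 𝔢(𝔩_d) in Q₊. In particular |𝔩_1| + … + |𝔩_d| = |𝔪|, so the tuple of lengths λ(𝔪) = (|𝔩_1|,…,|𝔩_d|) is a partition of the integer |𝔪|. -/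
/-- `𝔫 = K'(𝔩, 𝔪)` for the inverse Knuth–Viennot algorithm: there is an indexing of
the permissible pair `(𝔩, 𝔪)` as in `KVData`, together with depth functions, the
permutation `σ` and the segments `Δ♣_x = Δ(b(Δ_x), e(Δ_{σ(x)}))`, realizing
`𝔫 = Σ_{x ∈ I ∪ J} Δ♣_x`. -/
def IsKnuthStep (𝔩 𝔪 𝔫 : Multiset Segment) : Prop :=
  ∃ (D : KVData) (d' : Fin D.n → ℕ) (d : Fin D.n ⊕ Fin D.l → ℤ)
    (σ : Equiv.Perm (Fin D.n ⊕ Fin D.l)) (club : Fin D.n ⊕ Fin D.l → Segment),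
    D.DepthSpec d' d ∧ D.SigmaSpec d σ ∧
    (∀ x, (club x).b = (D.segOf x).b) ∧ (∀ x, (club x).e = (D.segOf (σ x)).e) ∧
    𝔪 = D.mSeg ∧ 𝔩 = D.lSeg ∧ 𝔫 = Multiset.map club Finset.univ.val

/-- A ladder multisegment: a nonzero multisegment whose segments can be enumerated
`Δ_l ≪ Δ_{l-1} ≪ ⋯ ≪ Δ_1`. -/
def IsLadderM (𝔩 : Multiset Segment) : Prop :=
  ∃ (k : ℕ) (f : Fin k → Segment), 0 < k ∧
    (∀ s t : Fin k, s < t → Segment.ll (f t) (f s)) ∧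
    𝔩 = Multiset.map f Finset.univ.val

/-- The width `ω(𝔫)`: the minimal number of ladder multisegments whose sum is `𝔫`. -/
noncomputable def widthM (𝔫 : Multiset Segment) : ℕ :=
  sInf {k : ℕ | ∃ f : Fin k → Multiset Segment, (∀ j, IsLadderM (f j)) ∧ 𝔫 = ∑ j, f j}

/-- `C(𝔪₁, 𝔪₂) = #{(i,j) : b(Δ¹_i) = e(Δ²_j) + 1}`, pairs counted with multiplicity. -/
def Cfun (𝔫₁ 𝔫₂ : Multiset Segment) : ℕ :=
  Multiset.card ((Multiset.product 𝔫₁ 𝔫₂).filter fun p => p.1.b = p.2.e + 1)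

/-- `𝔟(𝔫) ∈ Q₊`: the multiset of begin points (`Q₊`, the free commutative monoid on
the symbols `α_i`, `i ∈ ℤ`, is realized as `Multiset ℤ`). -/
def bwt (𝔫 : Multiset Segment) : Multiset ℤ := Multiset.map Segment.b 𝔫

/-- `𝔢(𝔫) ∈ Q₊`: the multiset of end points. -/
def ewt (𝔫 : Multiset Segment) : Multiset ℤ := Multiset.map Segment.e 𝔫

/-- The values of `f` on the segments indexed by `I ⊔ J` are its values on `𝔩` together with
those on `𝔪`, with multiplicity. -/
lemma KVData.map_segOf (D : KVData) (f : Segment → ℤ) :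
    Multiset.map (fun x => f (D.segOf x)) Finset.univ.val =
      Multiset.map f D.lSeg + Multiset.map f D.mSeg := by
  rw [add_comm, KVData.mSeg, KVData.lSeg, ← Finset.univ_disjSum_univ, Finset.val_disjSum,
    Multiset.disjSum, Multiset.map_add]
  simp only [Multiset.map_map]
  rfl

lemma IsKnuthStep.bwt_eq {𝔩 𝔪 𝔫 : Multiset Segment} (h : IsKnuthStep 𝔩 𝔪 𝔫) :
    bwt 𝔫 = bwt 𝔩 + bwt 𝔪 := by
  obtain ⟨D, _, _, σ, club, _, _, hb, _, rfl, rfl, rfl⟩ := h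
  simp only [bwt, ← D.map_segOf, Multiset.map_map, Function.comp_def, hb]

lemma IsKnuthStep.ewt_eq {𝔩 𝔪 𝔫 : Multiset Segment} (h : IsKnuthStep 𝔩 𝔪 𝔫) :
    ewt 𝔫 = ewt 𝔩 + ewt 𝔪 := by
  obtain ⟨D, _, _, σ, club, _, _, _, he, rfl, rfl, rfl⟩ := h
  simp only [ewt, ← D.map_segOf, Multiset.map_map, Function.comp_def, he]
  -- Reindexing along `σ` does not change the multiset of end points.
  conv_rhs => rw [← Multiset.map_univ_val_equiv σ, Multiset.map_map]
  rfl

/-- Telescoping of a weight `w` that is additive along the steps `ms k = K'(𝔩 k, ms (k + 1))`. -/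
lemma sum_of_step {M : Type*} [AddCommMonoid M] (w : Multiset Segment → M)
    (𝔩 ms : ℕ → Multiset Segment) (N : ℕ)
    (h : ∀ k < N, w (ms k) = w (𝔩 k) + w (ms (k + 1))) :
    w (ms 0) = ∑ k ∈ Finset.range N, w (𝔩 k) + w (ms N) := by
  induction N with
  | zero => simp
  | succ N ih =>
    rw [ih fun k hk => h k (by omega), h N (by omega), Finset.sum_range_succ, add_assoc]

/-- Proposition `eq:preser`.  Let `𝔪` be a nonzero multisegment with
RSK-transform `(𝔩_1, …, 𝔩_d)`, i.e. there are multisegments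
`𝔪 = 𝔪_0, 𝔪_1, …, 𝔪_{d-1}` with `𝔪_{k-1} = K'(𝔩_k, 𝔪_k)` for `1 ≤ k ≤ d-1`
(each pair `(𝔩_k, 𝔪_k)` permissible) and `𝔪_{d-1} = 𝔩_d` a ladder.  Then
`𝔟(𝔪) = 𝔟(𝔩_1) + … + 𝔟(𝔩_d)` and `𝔢(𝔪) = 𝔢(𝔩_1) + … + 𝔢(𝔩_d)` in `Q₊`; in
particular `|𝔩_1| + … + |𝔩_d| = |𝔪|`, so the tuple of lengths is a partition of the
integer `|𝔪|`.  (Here `𝔩 k`, `ms k`, for `0 ≤ k < d`, stand for `𝔩_{k+1}`, `𝔪_k`.) -/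
theorem rsk_transform_preserves_ends (𝔪 : Multiset Segment) (h𝔪 : 𝔪 ≠ 0)
    (dd : ℕ) (hdd : 0 < dd) (𝔩 ms : ℕ → Multiset Segment)
    (hms0 : ms 0 = 𝔪)
    (hstep : ∀ k, k < dd - 1 → IsKnuthStep (𝔩 k) (ms (k + 1)) (ms k))
    (hlast : ms (dd - 1) = 𝔩 (dd - 1)) (hlad : IsLadderM (𝔩 (dd - 1))) :
    bwt 𝔪 = ∑ k ∈ Finset.range dd, bwt (𝔩 k) ∧
    ewt 𝔪 = ∑ k ∈ Finset.range dd, ewt (𝔩 k) ∧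
    Multiset.card 𝔪 = ∑ k ∈ Finset.range dd, Multiset.card (𝔩 k) := by
  obtain ⟨N, rfl⟩ : ∃ N, dd = N + 1 := ⟨dd - 1, by omega⟩
  simp only [Nat.add_sub_cancel] at hstep hlast
  subst hms0
  have hb : bwt (ms 0) = ∑ k ∈ Finset.range (N + 1), bwt (𝔩 k) := by
    rw [sum_of_step bwt 𝔩 ms N fun k hk => (hstep k hk).bwt_eq, hlast, Finset.sum_range_succ]
  have he : ewt (ms 0) = ∑ k ∈ Finset.range (N + 1), ewt (𝔩 k) := by
    rw [sum_of_step ewt 𝔩 ms N fun k hk => (hstep k hk).ewt_eq, hlast, Finset.sum_range_succ]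
  refine ⟨hb, he, ?_⟩
  have hc := congrArg Multiset.card hb
  simpa only [bwt, Multiset.card_sum, Multiset.card_map] using hc
end
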